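/- Let n ≥ 1, let ψ : (0,∞) → ℝ be twice continuously differentiable with bounded support, and define η(s) = ψ(s)/s − ∫_s^∞ ψ(t)/t² dt for s > 0. Then for all i, l, m ∈ {1,…,n} and every x ∈ ℝ^n \ {0}, the second partial derivative ∂²/∂x_m ∂x_l of the function x ↦ η(|x|) x_i equals (ψ″(|x|)/|x|³ − 2ψ′(|x|)/|x|⁴) x_i x_l x_m + (ψ′(|x|)/|x|²)(δ_{lm} x_i + δ_{im} x_l + δ_{il} x_m). -/

import Mathlib

open MeasureTheory Filter Set

/-- A function `ζ : (0,∞) → ℝ` (modeled as `ℝ → ℝ`, values on nonpositive reals irrelevant)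
has bounded support. -/
def BddSupp (ζ : ℝ → ℝ) : Prop := ∃ R : ℝ, ∀ s, R ≤ s → ζ s = 0

/-!
If `f' s = s * g s`, then `x ↦ f ‖x‖` has gradient `g ‖x‖ • x`. Writing the derivative this way
avoids the factor `x / ‖x‖`, so that it can be iterated by the product rule: with `g' s = s * h s`,
differentiating `f ‖x‖ * ⟪a, x⟫` along `u` and then along `v` gives
`h ‖x‖ * ⟪a, x⟫ * ⟪u, x⟫ * ⟪v, x⟫` plus `g ‖x‖` times the symmetrization of `⟪u, v⟫ * ⟪a, x⟫`.

For `η = 𝓡⁻¹ψ` the two terms `± ψ s / s ^ 2` in the derivative cancel and `η' s = ψ' s / s`,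
whence `g s = ψ' s / s ^ 2` and `h s = ψ'' s / s ^ 3 - 2 * ψ' s / s ^ 4`.
-/

section Radial

open scoped Topology RealInnerProductSpace

variable {E : Type*} [NormedAddCommGroup E] [InnerProductSpace ℝ E] {f g : ℝ → ℝ} {c : ℝ} {x : E}

theorem hasFDerivAt_norm_of_ne_zero (hx : x ≠ 0) :
    HasFDerivAt (fun y : E => ‖y‖) (‖x‖⁻¹ • innerSL ℝ x) x := by
  have hsqrt := (hasStrictFDerivAt_norm_sq x).hasFDerivAt.sqrt
    (pow_ne_zero 2 (norm_ne_zero_iff.2 hx))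
  simp only [Real.sqrt_sq (norm_nonneg _)] at hsqrt
  refine hsqrt.congr_fderiv ?_
  rw [← Nat.cast_smul_eq_nsmul ℝ, smul_smul]
  congr 1
  field_simp
  norm_num

theorem hasFDerivAt_comp_norm (hf : HasDerivAt f (‖x‖ * c) ‖x‖) (hx : x ≠ 0) :
    HasFDerivAt (fun y : E => f ‖y‖) (c • innerSL ℝ x) x := by
  refine (hf.comp_hasFDerivAt x (hasFDerivAt_norm_of_ne_zero hx)).congr_fderiv ?_
  rw [smul_smul, mul_right_comm, mul_inv_cancel₀ (norm_ne_zero_iff.2 hx), one_mul]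

theorem fderiv_comp_norm_mul_inner_apply (hf : HasDerivAt f (‖x‖ * c) ‖x‖) (hx : x ≠ 0)
    (a u : E) :
    fderiv ℝ (fun y => f ‖y‖ * ⟪a, y⟫) x u = c * (⟪a, x⟫ * ⟪u, x⟫) + f ‖x‖ * ⟪a, u⟫ := by
  have hprod : HasFDerivAt (fun y => f ‖y‖ * ⟪a, y⟫) _ x :=
    (hasFDerivAt_comp_norm hf hx).fun_mul (innerSL ℝ a).hasFDerivAt
  rw [hprod.fderiv]
  simp only [add_apply, smul_apply, innerSL_apply_apply, smul_eq_mul, real_inner_comm x]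
  ring

theorem fderiv_fderiv_comp_norm_mul_inner_apply (hf : ∀ᶠ s in 𝓝 ‖x‖, HasDerivAt f (s * g s) s)
    (hg : HasDerivAt g (‖x‖ * c) ‖x‖) (hx : x ≠ 0) (a u v : E) :
    fderiv ℝ (fun y => fderiv ℝ (fun z => f ‖z‖ * ⟪a, z⟫) y u) x v =
      c * ⟪a, x⟫ * ⟪u, x⟫ * ⟪v, x⟫ +
        g ‖x‖ * (⟪u, v⟫ * ⟪a, x⟫ + ⟪a, v⟫ * ⟪u, x⟫ + ⟪a, u⟫ * ⟪v, x⟫) := by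
  have hfirst : (fun y => fderiv ℝ (fun z => f ‖z‖ * ⟪a, z⟫) y u) =ᶠ[𝓝 x]
      fun y => g ‖y‖ * (⟪a, y⟫ * ⟪u, y⟫) + f ‖y‖ * ⟪a, u⟫ := by
    filter_upwards [continuous_norm.continuousAt.eventually hf, isOpen_ne.mem_nhds hx] with y hfy hy
    exact fderiv_comp_norm_mul_inner_apply hfy hy a u
  have hsecond := ((hasFDerivAt_comp_norm hg hx).fun_mul
    ((innerSL ℝ a).hasFDerivAt.fun_mul (innerSL ℝ u).hasFDerivAt)).fun_add
    ((hasFDerivAt_comp_norm hf.self_of_nhds hx).mul_const ⟪a, u⟫)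
  rw [(hsecond.congr_of_eventuallyEq hfirst).fderiv]
  simp only [add_apply, smul_apply, innerSL_apply_apply, smul_eq_mul, real_inner_comm x]
  ring

end Radial

section TailIntegral

theorem hasDerivAt_integral_Ioi {E : Type*} [NormedAddCommGroup E] [NormedSpace ℝ E]
    [CompleteSpace E] {f : ℝ → E} {a s : ℝ} (hint : IntegrableOn f (Ioi a)) (has : a < s)
    (hf : ContinuousAt f s) : HasDerivAt (fun u => ∫ t in Ioi u, f t) (-f s) s := by
  have htail : ∀ u, a < u → IntegrableOn f (Ioi u) := fun u hu =>
    hint.mono_set (Ioi_subset_Ioi hu.le)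
  have hprimitive : HasDerivAt (fun u => ∫ t in s..u, f t) (f s) s :=
    intervalIntegral.integral_hasDerivAt_right IntervalIntegrable.refl
      ⟨Ioi a, Ioi_mem_nhds has, hint.aestronglyMeasurable⟩ hf
  refine (hprimitive.const_sub (∫ t in Ioi s, f t)).congr_of_eventuallyEq ?_
  filter_upwards [Ioi_mem_nhds has] with u hu
  rw [← intervalIntegral.integral_Ioi_sub_Ioi' (htail s has) (htail u hu), sub_sub_cancel]

theorem hasDerivAt_div_sub_integral_Ioi_div_sq {ψ : ℝ → ℝ} {ψ' a s : ℝ} (hψ : HasDerivAt ψ ψ' s)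
    (hint : IntegrableOn (fun t => ψ t / t ^ 2) (Ioi a)) (has : a < s) (hs : s ≠ 0) :
    HasDerivAt (fun u => ψ u / u - ∫ t in Ioi u, ψ t / t ^ 2) (ψ' / s) s := by
  have hcont : ContinuousAt (fun t => ψ t / t ^ 2) s :=
    hψ.continuousAt.div (by fun_prop) (pow_ne_zero 2 hs)
  refine ((hψ.fun_div (hasDerivAt_id' s) hs).fun_sub
    (hasDerivAt_integral_Ioi hint has hcont)).congr_deriv ?_
  field_simp
  ring

namespace BddSupp

theorem integrableOn_Ioi {f : ℝ → ℝ} (hb : BddSupp f) {s : ℝ}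
    (hf : LocallyIntegrableOn f (Ici s)) : IntegrableOn f (Ioi s) := by
  obtain ⟨R, hR⟩ := hb
  have hatTop : IntegrableAtFilter f atTop :=
    ⟨Ici R, Ici_mem_atTop R,
      integrableOn_zero.congr_fun (fun t ht => (hR t ht).symm) measurableSet_Ici⟩
  exact (integrableOn_Ici_iff_integrableAtFilter_atTop.2 ⟨hatTop, hf⟩).mono_set Ioi_subset_Ici_self

theorem integrableOn_Ioi_div_sq {ψ : ℝ → ℝ} (hb : BddSupp ψ) (hψ : ContinuousOn ψ (Ioi 0)) {s : ℝ}
    (hs : 0 < s) : IntegrableOn (fun t => ψ t / t ^ 2) (Ioi s) := by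
  have hsupp : BddSupp fun t => ψ t / t ^ 2 :=
    hb.imp fun R hR t ht => by simp only [hR t ht, zero_div]
  have hcont : ContinuousOn (fun t => ψ t / t ^ 2) (Ici s) :=
    (hψ.mono (Ici_subset_Ioi.2 hs)).div (by fun_prop) fun t ht =>
      pow_ne_zero 2 (hs.trans_le ht).ne'
  exact hsupp.integrableOn_Ioi (hcont.locallyIntegrableOn measurableSet_Ici)

end BddSupp

end TailIntegral

section General

open scoped RealInnerProductSpace

theorem stmt15_general {E : Type*} [NormedAddCommGroup E] [InnerProductSpace ℝ E] {ψ η : ℝ → ℝ}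
    (hψ : DifferentiableOn ℝ ψ (Ioi 0)) (hψ' : DifferentiableOn ℝ (deriv ψ) (Ioi 0))
    (hint : ∀ s > 0, IntegrableOn (fun t => ψ t / t ^ 2) (Ioi s))
    (hη : ∀ s > 0, η s = ψ s / s - ∫ t in Ioi s, ψ t / t ^ 2) (a u v : E) {x : E} (hx : x ≠ 0) :
    fderiv ℝ (fun y => fderiv ℝ (fun z => η ‖z‖ * ⟪a, z⟫) y u) x v =
      (deriv (deriv ψ) ‖x‖ / ‖x‖ ^ 3 - 2 * deriv ψ ‖x‖ / ‖x‖ ^ 4) * ⟪a, x⟫ * ⟪u, x⟫ * ⟪v, x⟫ +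
        deriv ψ ‖x‖ / ‖x‖ ^ 2 * (⟪u, v⟫ * ⟪a, x⟫ + ⟪a, v⟫ * ⟪u, x⟫ + ⟪a, u⟫ * ⟪v, x⟫) := by
  have hr : 0 < ‖x‖ := norm_pos_iff.2 hx
  have hη' : ∀ s > 0, HasDerivAt η (s * (deriv ψ s / s ^ 2)) s := fun s hs => by
    have hdiv := hasDerivAt_div_sub_integral_Ioi_div_sq
      (hψ.differentiableAt (Ioi_mem_nhds hs)).hasDerivAt (hint _ (half_pos hs)) (half_lt_self hs)
      hs.ne'
    refine (hdiv.congr_of_eventuallyEq ?_).congr_deriv (by field_simp)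
    filter_upwards [Ioi_mem_nhds hs] with t ht using hη t ht
  have hg : HasDerivAt (fun s => deriv ψ s / s ^ 2)
      (‖x‖ * (deriv (deriv ψ) ‖x‖ / ‖x‖ ^ 3 - 2 * deriv ψ ‖x‖ / ‖x‖ ^ 4)) ‖x‖ := by
    refine ((hψ'.differentiableAt (Ioi_mem_nhds hr)).hasDerivAt.fun_div (hasDerivAt_pow 2 ‖x‖)
      (pow_ne_zero 2 hr.ne')).congr_deriv ?_
    field_simp
    ring
  exact fderiv_fderiv_comp_norm_mul_inner_apply
    (eventually_of_mem (Ioi_mem_nhds hr) hη') hg hx a u v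

end General

/-- Second partial derivatives `∂²/∂x_m ∂x_l` of the map `x ↦ η(|x|) xᵢ` on `ℝⁿ \ {0}`,
where `η = 𝓡⁻¹ψ`, i.e. `η(s) = ψ(s)/s − ∫_s^∞ ψ(t)/t² dt`. -/
theorem stmt15 (n : ℕ) (hn : 1 ≤ n) (ψ : ℝ → ℝ) (hψ : ContDiffOn ℝ 2 ψ (Set.Ioi 0))
    (hb : BddSupp ψ) (η : ℝ → ℝ)
    (hη : ∀ s > (0:ℝ), η s = ψ s / s - ∫ t in Set.Ioi s, ψ t / t ^ 2)
    (i l m : Fin n) (x : EuclideanSpace ℝ (Fin n)) (hx : x ≠ 0) :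
    fderiv ℝ
        (fun y : EuclideanSpace ℝ (Fin n) =>
          fderiv ℝ (fun z : EuclideanSpace ℝ (Fin n) => η ‖z‖ * z i) y
            (EuclideanSpace.single l 1))
        x (EuclideanSpace.single m 1) =
      (deriv (deriv ψ) ‖x‖ / ‖x‖ ^ 3 - 2 * deriv ψ ‖x‖ / ‖x‖ ^ 4) * x i * x l * x m +
        deriv ψ ‖x‖ / ‖x‖ ^ 2 *
          ((if l = m then (1:ℝ) else 0) * x i + (if i = m then (1:ℝ) else 0) * x l +
            (if i = l then (1:ℝ) else 0) * x m) := by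
  simpa [EuclideanSpace.inner_single_left] using stmt15_general (hψ.differentiableOn two_ne_zero)
    ((hψ.deriv_of_isOpen (m := 1) isOpen_Ioi (by norm_num)).differentiableOn one_ne_zero)
    (fun _ => hb.integrableOn_Ioi_div_sq hψ.continuousOn) hη
    (EuclideanSpace.single i 1) (EuclideanSpace.single l 1) (EuclideanSpace.single m 1) hx
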